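/- arXiv:1602.03586 — 3 statements merged into one kernel-verified Lean document; each statement's English description precedes it below -/
import Mathlib

section
/- Let n ≥ 4 and s ≥ 2 be integers, let P be a non-trivial protocol on C_n with s colours and let X be uniformly distributed on Fix(P). For any integers j, k with 1 ≤ j and j + 3 ≤ k ≤ n, one has H_j^k ≤ Σ_{i=j}^{k} h(i). -/
open Finset

/-- Base-`s` Shannon entropy of the random variable `g(X)` where `X` is uniformly
distributed on the finite set `F`. -/
noncomputable def entOf (s : ℕ) {α β : Type} [DecidableEq β] [Fintype β]
    (F : Finset α) (g : α → β) : ℝ :=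
  -∑ y : β, (((F.filter fun c => g c = y).card : ℝ) / (F.card : ℝ)) *
      Real.logb s (((F.filter fun c => g c = y).card : ℝ) / (F.card : ℝ))

/-- The fixed set of a protocol `f` on the cycle `C_n` with `s` colours:
all colourings `c` with `c i = f i (c (i-1), c (i+1))` for every vertex `i`
(vertex indices taken modulo `n`). -/
def cycleFix (n s : ℕ) [NeZero n] (f : ZMod n → Fin s × Fin s → Fin s) :
    Finset (ZMod n → Fin s) :=
  Finset.univ.filter fun c => ∀ i, c i = f i (c (i - 1), c (i + 1))

/-- `h(i₁,…,i_k)`: entropy (base `s`) of the tuple of coordinates of `X ∈_u F`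
indexed by the set `T` of integers (interpreted modulo `n`). -/
noncomputable def entT (n s : ℕ) [NeZero n] (F : Finset (ZMod n → Fin s))
    (T : Finset ℤ) : ℝ :=
  entOf s F (fun c => fun i : {x // x ∈ T} => c ((i.1 : ℤ) : ZMod n))

/-- `H_j^k = h(j,j+1,…,k-1) + h(j+1,j+2,…,k)`. -/
noncomputable def entH (n s : ℕ) [NeZero n] (F : Finset (ZMod n → Fin s))
    (j k : ℤ) : ℝ :=
  entT n s F (Finset.Icc j (k - 1)) + entT n s F (Finset.Icc (j + 1) k)

/-!
In a fixed colouring the colour of a vertex is a function of the colours of its two neighbours, so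
adding to a set of vertices the common neighbour of two of its members does not increase the
entropy. Hence `h(i-1, i, i+1) ≤ h(i-1) + h(i+1)`, and two such inequalities settle `k = j + 3`.
For larger `k`, one has `H_j^{k+1} ≤ H_j^k + h(k+1)`: submodularity applies to `{j,…,k-1}` and
`{j+1,…,k}`, with union `{j,…,k}` and intersection `{j+1,…,k-1}`, and the latter together with
`k+1` determines the colour of `k`.
-/

section Determination

variable {α β γ δ : Type*} {F : Finset α} {f : α → β} {g : α → γ} {h : α → δ}

/-- `DeterminesOn F f g`: on the sample space `F`, the random variable `g` is a function of `f`. -/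
def DeterminesOn (F : Finset α) (f : α → β) (g : α → γ) : Prop :=
  ∀ ⦃x⦄, x ∈ F → ∀ ⦃y⦄, y ∈ F → f x = f y → g x = g y

lemma DeterminesOn.refl (F : Finset α) (f : α → β) : DeterminesOn F f f :=
  fun _ _ _ _ e => e

lemma DeterminesOn.trans (hfg : DeterminesOn F f g) (hgh : DeterminesOn F g h) :
    DeterminesOn F f h :=
  fun _ hx _ hy e => hgh hx hy (hfg hx hy e)

lemma DeterminesOn.prodMk (hfg : DeterminesOn F f g) (hfh : DeterminesOn F f h) :
    DeterminesOn F f (fun c => (g c, h c)) :=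
  fun _ hx _ hy e => Prod.ext (hfg hx hy e) (hfh hx hy e)

lemma determinesOn_fst : DeterminesOn F (fun c => (f c, g c)) f :=
  fun _ _ _ _ e => congrArg Prod.fst e

lemma determinesOn_snd : DeterminesOn F (fun c => (f c, g c)) g :=
  fun _ _ _ _ e => congrArg Prod.snd e

end Determination

section FiberCard

variable {α β γ δ : Type*} [DecidableEq β] [DecidableEq γ] [DecidableEq δ]
  {F : Finset α} {f : α → β} {g : α → γ} {h : α → δ}

/-- The size of the fibre of `f` through `c` within `F`. Divided by `#F`, it is the probability
that `f X = f c` for `X` uniform on `F`. -/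
def fiberCard (F : Finset α) (f : α → β) (c : α) : ℕ := #{x ∈ F | f x = f c}

lemma fiberCard_pos {c : α} (hc : c ∈ F) : 0 < fiberCard F f c :=
  card_pos.mpr ⟨c, mem_filter.mpr ⟨hc, rfl⟩⟩

lemma fiberCard_congr {x y : α} (hxy : f x = f y) : fiberCard F f x = fiberCard F f y := by
  simp only [fiberCard, hxy]

lemma DeterminesOn.fiberCard_le (hfg : DeterminesOn F f g) {c : α} (hc : c ∈ F) :
    fiberCard F f c ≤ fiberCard F g c :=
  card_le_card <| monotone_filter_right F fun _ hx e => hfg hx hc e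

lemma fiberCard_prodMk {x c : α} (hc : f c = f x) :
    fiberCard F (fun y => (f y, g y)) c = fiberCard {y ∈ F | f y = f x} g c := by
  simp only [fiberCard, filter_filter, Prod.mk.injEq, hc]

lemma sum_fiberCard_mul {R : Type*} [Semiring R] (F : Finset α) (f : α → β) (w : α → R) :
    ∑ c ∈ F, fiberCard F f c * w c = ∑ x ∈ F, ∑ c ∈ F with f c = f x, w c := by
  simp only [fiberCard, ← nsmul_eq_mul, ← sum_const]
  exact sum_comm' fun x y => by simp only [mem_filter]; tauto

lemma sum_fiberCard_div_fiberCard (F G : Finset α) (f : α → β) :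
    ∑ c ∈ G, (fiberCard F f c / fiberCard G f c : ℝ) = #{y ∈ F | f y ∈ G.image f} := by
  rw [← sum_card_fiberwise_eq_card_filter, Nat.cast_sum,
    ← sum_fiberwise_of_maps_to fun c hc => mem_image_of_mem f hc]
  refine sum_congr rfl fun b hb => ?_
  have hfiber : (#{c ∈ G | f c = b} : ℝ) ≠ 0 := by
    obtain ⟨c, hc, rfl⟩ := mem_image.mp hb
    exact_mod_cast (fiberCard_pos hc).ne'
  calc ∑ c ∈ G with f c = b, (fiberCard F f c / fiberCard G f c : ℝ)
      = ∑ c ∈ G with f c = b, (#{c ∈ F | f c = b} / #{c ∈ G | f c = b} : ℝ) :=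
        sum_congr rfl fun c hc => by simp only [fiberCard, (mem_filter.mp hc).2]
    _ = #{c ∈ F | f c = b} := by
        rw [sum_const, nsmul_eq_mul, mul_div_cancel₀ _ hfiber]

lemma sum_fiberCard_div_fiberCard_prodMk_le (hfh : DeterminesOn F f h) (hgh : DeterminesOn F g h)
    {x : α} (hx : x ∈ F) :
    ∑ c ∈ F with f c = f x, (fiberCard F g c / fiberCard F (fun y => (f y, g y)) c : ℝ)
      ≤ fiberCard F h x := by
  have hprod : ∀ c ∈ ({y ∈ F | f y = f x} : Finset α),
      (fiberCard F g c / fiberCard F (fun y => (f y, g y)) c : ℝ)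
        = fiberCard F g c / fiberCard {y ∈ F | f y = f x} g c :=
    fun c hc => by rw [fiberCard_prodMk (mem_filter.mp hc).2]
  rw [sum_congr rfl hprod, sum_fiberCard_div_fiberCard, Nat.cast_le]
  refine card_le_card <| monotone_filter_right F fun y hy hgy => ?_
  obtain ⟨c, hc, hgc⟩ := mem_image.mp hgy
  obtain ⟨hcF, hfc⟩ := mem_filter.mp hc
  exact (hgh hy hcF hgc.symm).trans (hfh hcF hx hfc)

-- The summand is `p(f,h) p(g,h) / (p(f,g,h) p(h))`, so by Gibbs' inequality this bound becomes the
-- nonnegativity of the conditional mutual information `I(f; g | h)`.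
lemma sum_fiberCard_mul_div_le_card (hfh : DeterminesOn F f h) (hgh : DeterminesOn F g h) :
    ∑ c ∈ F, (fiberCard F f c * fiberCard F g c /
      (fiberCard F (fun y => (f y, g y)) c * fiberCard F h c) : ℝ) ≤ #F := by
  calc ∑ c ∈ F, (fiberCard F f c * fiberCard F g c /
        (fiberCard F (fun y => (f y, g y)) c * fiberCard F h c) : ℝ)
      = ∑ x ∈ F, ∑ c ∈ F with f c = f x, (fiberCard F g c /
        fiberCard F (fun y => (f y, g y)) c / fiberCard F h c : ℝ) := by
        simp only [mul_div_assoc, ← div_div, sum_fiberCard_mul]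
    _ = ∑ x ∈ F, (∑ c ∈ F with f c = f x, (fiberCard F g c /
        fiberCard F (fun y => (f y, g y)) c : ℝ)) / fiberCard F h x := by
        refine sum_congr rfl fun x hx => ?_
        rw [sum_div]
        refine sum_congr rfl fun c hc => ?_
        obtain ⟨hcF, hfc⟩ := mem_filter.mp hc
        rw [fiberCard_congr (hfh hcF hx hfc)]
    _ ≤ ∑ _ ∈ F, (1 : ℝ) :=
        sum_le_sum fun x hx => div_le_one_of_le₀
          (sum_fiberCard_div_fiberCard_prodMk_le hfh hgh hx) (Nat.cast_nonneg _)
    _ = #F := by rw [sum_const, nsmul_eq_mul, mul_one]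

end FiberCard

section Entropy

open scoped BigOperators

lemma expect_logb_le_expect_logb_of_sum_div_le_card {α : Type*} {F : Finset α} {b : ℝ}
    {u v : α → ℝ} (hb : 1 < b) (hF : F.Nonempty) (hu : ∀ c ∈ F, 0 < u c)
    (hv : ∀ c ∈ F, 0 < v c) (huv : ∑ c ∈ F, u c / v c ≤ #F) :
    𝔼 c ∈ F, Real.logb b (u c) ≤ 𝔼 c ∈ F, Real.logb b (v c) := by
  have hlogb : ∀ c ∈ F,
      Real.logb b (u c) - Real.logb b (v c) ≤ (u c / v c - 1) / Real.log b := fun c hc => by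
    rw [← Real.logb_div (hu c hc).ne' (hv c hc).ne']
    exact div_le_div_of_nonneg_right (Real.log_le_sub_one_of_pos (div_pos (hu c hc) (hv c hc)))
      (Real.log_pos hb).le
  rw [← sub_nonpos, ← expect_sub_distrib]
  calc 𝔼 c ∈ F, (Real.logb b (u c) - Real.logb b (v c))
      ≤ 𝔼 c ∈ F, (u c / v c - 1) / Real.log b := expect_le_expect hlogb
    _ = ((∑ c ∈ F, u c / v c) / #F - 1) / Real.log b := by
        rw [← expect_div, expect_sub_distrib, expect_const hF, expect_eq_sum_div_card]
    _ ≤ 0 := div_nonpos_of_nonpos_of_nonneg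
        (sub_nonpos.mpr (div_le_one_of_le₀ huv (Nat.cast_nonneg _))) (Real.log_pos hb).le

variable {s : ℕ} {α β γ δ : Type} [DecidableEq β] [Fintype β] [DecidableEq γ] [Fintype γ]
  [DecidableEq δ] [Fintype δ] {F : Finset α} {f : α → β} {g : α → γ} {h : α → δ}

lemma entOf_eq_logb_card_sub_expect (s : ℕ) (hF : F.Nonempty) (f : α → β) :
    entOf s F f = Real.logb s #F - 𝔼 c ∈ F, Real.logb s (fiberCard F f c) := by
  have hcard : (#F : ℝ) ≠ 0 := by exact_mod_cast hF.card_ne_zero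
  have hexpect : ∑ y : β, (#{c ∈ F | f c = y} / #F : ℝ) * Real.logb s (#{c ∈ F | f c = y} / #F)
      = 𝔼 c ∈ F, Real.logb s (fiberCard F f c / #F) := by
    rw [expect_eq_sum_div_card, ← sum_fiberwise F f, sum_div]
    refine sum_congr rfl fun y _ => ?_
    have hy : ∀ c ∈ ({c ∈ F | f c = y} : Finset α),
        Real.logb s (fiberCard F f c / #F) = Real.logb s (#{c ∈ F | f c = y} / #F) :=
      fun c hc => by simp only [fiberCard, (mem_filter.mp hc).2]
    rw [sum_congr rfl hy, sum_const, nsmul_eq_mul, div_mul_eq_mul_div]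
  have hdiv : ∀ c ∈ F, Real.logb s (fiberCard F f c / #F)
      = Real.logb s (fiberCard F f c) - Real.logb s #F :=
    fun c hc => Real.logb_div (by exact_mod_cast (fiberCard_pos hc).ne') hcard
  rw [entOf, hexpect, expect_congr rfl hdiv, expect_sub_distrib, expect_const hF, neg_sub]

lemma entOf_const (s : ℕ) (hF : F.Nonempty) (b : β) : entOf s F (fun _ => b) = 0 := by
  simp only [entOf_eq_logb_card_sub_expect s hF, fiberCard, filter_true, expect_const hF, sub_self]

lemma DeterminesOn.entOf_le (hfg : DeterminesOn F f g) (hs : 1 < s) (hF : F.Nonempty) :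
    entOf s F g ≤ entOf s F f := by
  rw [entOf_eq_logb_card_sub_expect s hF, entOf_eq_logb_card_sub_expect s hF]
  refine sub_le_sub_left (expect_le_expect fun c hc => ?_) _
  exact Real.logb_le_logb_of_le (by exact_mod_cast hs) (by exact_mod_cast fiberCard_pos hc)
    (by exact_mod_cast hfg.fiberCard_le hc)

lemma entOf_prodMk_add_entOf_le (hs : 1 < s) (hF : F.Nonempty) (hfh : DeterminesOn F f h)
    (hgh : DeterminesOn F g h) :
    entOf s F (fun c => (f c, g c)) + entOf s F h ≤ entOf s F f + entOf s F g := by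
  have hpos {κ : Type} [DecidableEq κ] (φ : α → κ) : ∀ c ∈ F, (0 : ℝ) < fiberCard F φ c :=
    fun c hc => by exact_mod_cast fiberCard_pos hc
  have hlogb {κ κ' : Type} [DecidableEq κ] [DecidableEq κ'] (φ : α → κ) (ψ : α → κ') :
      𝔼 c ∈ F, Real.logb s (fiberCard F φ c * fiberCard F ψ c)
        = 𝔼 c ∈ F, Real.logb s (fiberCard F φ c) + 𝔼 c ∈ F, Real.logb s (fiberCard F ψ c) := by
    rw [← expect_add_distrib]
    exact expect_congr rfl fun c hc => Real.logb_mul (hpos φ c hc).ne' (hpos ψ c hc).ne'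
  have hexpect := expect_logb_le_expect_logb_of_sum_div_le_card (b := s)
    (by exact_mod_cast hs) hF (fun c hc => mul_pos (hpos f c hc) (hpos g c hc))
    (fun c hc => mul_pos (hpos _ c hc) (hpos h c hc)) (sum_fiberCard_mul_div_le_card hfh hgh)
  rw [hlogb, hlogb] at hexpect
  simp only [entOf_eq_logb_card_sub_expect s hF]
  linarith

lemma entOf_prodMk_le (hs : 1 < s) (hF : F.Nonempty) (f : α → β) (g : α → γ) :
    entOf s F (fun c => (f c, g c)) ≤ entOf s F f + entOf s F g := by
  have hunit := entOf_prodMk_add_entOf_le (f := f) (g := g) (h := fun _ => ()) hs hF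
    (fun _ _ _ _ _ => rfl) (fun _ _ _ _ _ => rfl)
  rwa [entOf_const s hF, add_zero] at hunit

end Entropy

section Tuple

variable {α ι γ : Type*} {β : ι → Type*} {F : Finset α} {X : ∀ i, α → β i} {S T : Finset ι}

/-- The random tuple `(X i)_{i ∈ T}`, whose entropy is the joint entropy of the `X i`, `i ∈ T`. -/
def tuple (X : ∀ i, α → β i) (T : Finset ι) : α → ∀ i : {i // i ∈ T}, β i :=
  fun c i => X i c

lemma determinesOn_tuple_iff {g : α → γ} :
    DeterminesOn F g (tuple X T) ↔ ∀ i ∈ T, DeterminesOn F g (X i) :=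
  ⟨fun h i hi _ hx _ hy e => congrFun (h hx hy e) ⟨i, hi⟩,
    fun h _ hx _ hy e => funext fun i => h i i.2 hx hy e⟩

lemma tuple_determinesOn_apply {i : ι} (hi : i ∈ T) : DeterminesOn F (tuple X T) (X i) :=
  determinesOn_tuple_iff.mp (.refl F _) i hi

lemma tuple_determinesOn_tuple (h : S ⊆ T) : DeterminesOn F (tuple X T) (tuple X S) :=
  determinesOn_tuple_iff.mpr fun _ hi => tuple_determinesOn_apply (h hi)

lemma prodMk_tuple_determinesOn_tuple_union [DecidableEq ι] :
    DeterminesOn F (fun c => (tuple X S c, tuple X T c)) (tuple X (S ∪ T)) :=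
  determinesOn_tuple_iff.mpr fun _ hi => (mem_union.mp hi).elim
    (fun hS => determinesOn_fst.trans (tuple_determinesOn_apply hS))
    (fun hT => determinesOn_snd.trans (tuple_determinesOn_apply hT))

end Tuple

section JointEntropy

variable {s : ℕ} {α ι : Type} {β : ι → Type} [DecidableEq ι] [∀ i, DecidableEq (β i)]
  [∀ i, Fintype (β i)] {F : Finset α} {X : ∀ i, α → β i} {T : Finset ι}

/-- The joint entropy `h(T)` of the random variables `X i`, `i ∈ T`, in base `s`. For `X` the
family of coordinates of a colouring this is `entT`. -/
noncomputable def jointEntropy (s : ℕ) (F : Finset α) (X : ∀ i, α → β i) (T : Finset ι) : ℝ :=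
  entOf s F (tuple X T)

lemma jointEntropy_union_add_inter_le (hs : 1 < s) (hF : F.Nonempty) (X : ∀ i, α → β i)
    (S T : Finset ι) :
    jointEntropy s F X (S ∪ T) + jointEntropy s F X (S ∩ T)
      ≤ jointEntropy s F X S + jointEntropy s F X T :=
  (add_le_add_left (prodMk_tuple_determinesOn_tuple_union.entOf_le hs hF) _).trans <|
    entOf_prodMk_add_entOf_le hs hF (tuple_determinesOn_tuple inter_subset_left)
      (tuple_determinesOn_tuple inter_subset_right)

lemma jointEntropy_union_le (hs : 1 < s) (hF : F.Nonempty) (X : ∀ i, α → β i)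
    (S T : Finset ι) :
    jointEntropy s F X (S ∪ T) ≤ jointEntropy s F X S + jointEntropy s F X T :=
  (prodMk_tuple_determinesOn_tuple_union.entOf_le hs hF).trans (entOf_prodMk_le hs hF _ _)

lemma jointEntropy_insert_le_of_determinesOn (hs : 1 < s) (hF : F.Nonempty) {a b i : ι}
    (hi : DeterminesOn F (fun c => (X a c, X b c)) (X i)) (ha : a ∈ T) (hb : b ∈ T) :
    jointEntropy s F X (insert i T) ≤ jointEntropy s F X T := by
  refine DeterminesOn.entOf_le (determinesOn_tuple_iff.mpr fun l hl => ?_) hs hF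
  obtain rfl | hl := mem_insert.mp hl
  · exact ((tuple_determinesOn_apply ha).prodMk (tuple_determinesOn_apply hb)).trans hi
  · exact tuple_determinesOn_apply hl

end JointEntropy

section Windows

lemma sum_Icc_add_one_right {M : Type*} [AddCommMonoid M] (w : ℤ → M) {j k : ℤ}
    (hjk : j ≤ k + 1) : ∑ i ∈ Icc j (k + 1), w i = ∑ i ∈ Icc j k, w i + w (k + 1) := by
  rw [← sum_Ico_add_eq_sum_Icc hjk, Ico_add_one_right_eq_Icc]

variable {s : ℕ} {α : Type} {β : ℤ → Type} [∀ i, DecidableEq (β i)] [∀ i, Fintype (β i)]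
  {F : Finset α} {X : ∀ i, α → β i}

lemma jointEntropy_Icc_add_one_le (hs : 1 < s) (hF : F.Nonempty) {j k : ℤ} (hjk : j < k)
    (hX : DeterminesOn F (fun c => (X (k - 1) c, X (k + 1) c)) (X k)) :
    jointEntropy s F X (Icc j (k + 1))
      ≤ jointEntropy s F X (Icc j (k - 1)) + jointEntropy s F X {k + 1} := by
  have hIcc : Icc j (k + 1) = insert k (Icc j (k - 1) ∪ {k + 1}) := by
    ext i
    simp only [mem_Icc, mem_insert, mem_union, mem_singleton]
    lia
  rw [hIcc]
  have hl : k - 1 ∈ Icc j (k - 1) ∪ {k + 1} :=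
    mem_union_left _ (right_mem_Icc.mpr (Int.le_sub_one_of_lt hjk))
  have hr : k + 1 ∈ Icc j (k - 1) ∪ {k + 1} := mem_union_right _ (mem_singleton_self _)
  exact (jointEntropy_insert_le_of_determinesOn hs hF hX hl hr).trans
    (jointEntropy_union_le hs hF X _ _)

lemma jointEntropy_Icc_add_inter_le (hs : 1 < s) (hF : F.Nonempty) (X : ∀ i, α → β i) {j k : ℤ}
    (hjk : j < k) :
    jointEntropy s F X (Icc j k) + jointEntropy s F X (Icc (j + 1) (k - 1))
      ≤ jointEntropy s F X (Icc j (k - 1)) + jointEntropy s F X (Icc (j + 1) k) := by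
  have hunion : Icc j (k - 1) ∪ Icc (j + 1) k = Icc j k := by
    ext i
    simp only [mem_union, mem_Icc]
    lia
  have hinter : Icc j (k - 1) ∩ Icc (j + 1) k = Icc (j + 1) (k - 1) := by
    ext i
    simp only [mem_inter, mem_Icc]
    lia
  rw [← hunion, ← hinter]
  exact jointEntropy_union_add_inter_le hs hF X _ _

theorem cycle_guessing_stmt3_general (hs : 1 < s) (hF : F.Nonempty) {j k : ℤ} (hjk : j + 3 ≤ k)
    (hX : ∀ i ∈ Ioo j k, DeterminesOn F (fun c => (X (i - 1) c, X (i + 1) c)) (X i)) :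
    jointEntropy s F X (Icc j (k - 1)) + jointEntropy s F X (Icc (j + 1) k)
      ≤ ∑ i ∈ Icc j k, jointEntropy s F X {i} := by
  induction k, hjk using Int.leInduction with
  | base =>
    have hfirst := jointEntropy_Icc_add_one_le hs hF (lt_add_one j)
      (hX (j + 1) (mem_Ioo.mpr (by lia)))
    have hsecond := jointEntropy_Icc_add_one_le hs hF (lt_add_one (j + 1))
      (hX (j + 1 + 1) (mem_Ioo.mpr (by lia)))
    have hsum : ∑ i ∈ Icc j (j + 1 + 1 + 1), jointEntropy s F X {i}
        = jointEntropy s F X {j} + jointEntropy s F X {j + 1} + jointEntropy s F X {j + 1 + 1}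
          + jointEntropy s F X {j + 1 + 1 + 1} := by
      rw [sum_Icc_add_one_right _ (by lia), sum_Icc_add_one_right _ (by lia),
        sum_Icc_add_one_right _ (by lia), Icc_self, sum_singleton]
    rw [add_sub_cancel_right, Icc_self] at hfirst hsecond
    rw [show j + 3 = j + 1 + 1 + 1 by ring, hsum, add_sub_cancel_right]
    linarith
  | succ k hjk ih =>
    have hwindow := jointEntropy_Icc_add_inter_le hs hF X (show j < k by lia)
    have hdrop := jointEntropy_Icc_add_one_le hs hF (show j + 1 < k by lia)
      (hX k (mem_Ioo.mpr (by lia)))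
    have hih := ih fun i hi => hX i (Ioo_subset_Ioo_right (by lia) hi)
    rw [sum_Icc_add_one_right _ (by lia), add_sub_cancel_right]
    linarith

end Windows

section Cycle

variable {n s : ℕ} [NeZero n]

lemma entT_eq_jointEntropy (F : Finset (ZMod n → Fin s)) (T : Finset ℤ) :
    entT n s F T = jointEntropy s F (fun (i : ℤ) c => c (i : ZMod n)) T := rfl

lemma cycleFix_determinesOn (f : ZMod n → Fin s × Fin s → Fin s) (i : ℤ) :
    DeterminesOn (cycleFix n s f)
      (fun c => (c ((i - 1 : ℤ) : ZMod n), c ((i + 1 : ℤ) : ZMod n))) (fun c => c i) := by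
  simp only [Int.cast_sub, Int.cast_add, Int.cast_one]
  exact fun x hx y hy hxy => calc
    x i = f i (x (i - 1), x (i + 1)) := (mem_filter.mp hx).2 i
    _ = f i (y (i - 1), y (i + 1)) := congrArg (f i) hxy
    _ = y i := ((mem_filter.mp hy).2 i).symm

end Cycle

/-- Let `n ≥ 4` and `s ≥ 2`, let `P` be a non-trivial protocol on
`C_n` with `s` colours and let `X` be uniform on `Fix(P)`.  For integers `j, k` with
`1 ≤ j` and `j + 3 ≤ k ≤ n` we have `H_j^k ≤ ∑_{i=j}^{k} h(i)`. -/
theorem cycle_guessing_stmt3 (n s : ℕ) [NeZero n] (hn : 4 ≤ n) (hs : 2 ≤ s)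
    (f : ZMod n → Fin s × Fin s → Fin s)
    (hne : (cycleFix n s f).Nonempty)
    (j k : ℤ) (hj : 1 ≤ j) (hjk : j + 3 ≤ k) (hk : k ≤ n) :
    entH n s (cycleFix n s f) j k ≤
      ∑ i ∈ Finset.Icc j k, entT n s (cycleFix n s f) {i} := by
  simp only [entH, entT_eq_jointEntropy]
  exact cycle_guessing_stmt3_general (β := fun _ => Fin s) hs hne hjk
    fun i _ => cycleFix_determinesOn f i
end

section
/- Let n ≥ 5 and s ≥ 2 be integers, let P be a non-trivial protocol on C_n with s colours and let X be uniformly distributed on Fix(P). Then H_1^5 ≤ 3 + h(2,4) − I(X_2; X_4 | X_3). -/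
/-!
Write `h` for joint entropies. Submodularity gives
`h(1,2,3,4) ≤ h(1,2,3) + h(2,3,4) - h(2,3)` and `h(2,3,4,5) ≤ h(2,3,4) + h(3,4,5) - h(3,4)`.
On the fixed set each vertex is a function of its two neighbours, so
`h(1,2,3) = h(1,3) ≤ 1 + h(3)`, `h(3,4,5) = h(3,5) ≤ 1 + h(3)` and `h(2,3,4) = h(2,4)`.
Adding up and using `h(3) ≤ 1` once gives the bound.

Submodularity and `h(i) ≤ 1` are both instances of Gibbs' inequality, for the sub-distributions
`p(x,z) p(y,z) / p(z)` and the uniform one respectively.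
-/

open Finset

section Entropy

open scoped BigOperators

variable {α β γ δ : Type} [DecidableEq β] [DecidableEq γ] [DecidableEq δ] {F : Finset α}

/-- The probability that `g(X) = y`, where `X` is uniformly distributed on `F`; it is `0` for
empty `F`. -/
noncomputable def uniformProb (F : Finset α) (g : α → β) (y : β) : ℝ :=
  (#{c ∈ F | g c = y} : ℝ) / #F

theorem uniformProb_nonneg (F : Finset α) (g : α → β) (y : β) : 0 ≤ uniformProb F g y := by
  unfold uniformProb
  positivity

theorem uniformProb_le_one (F : Finset α) (g : α → β) (y : β) : uniformProb F g y ≤ 1 :=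
  div_le_one_of_le₀ (mod_cast card_filter_le _ _) (Nat.cast_nonneg _)

theorem uniformProb_apply_pos {c : α} (hc : c ∈ F) (g : α → β) : 0 < uniformProb F g (g c) := by
  have hfiber : 0 < #{d ∈ F | g d = g c} := card_pos.2 ⟨c, by simp [hc]⟩
  have hcard : 0 < #F := card_pos.2 ⟨c, hc⟩
  unfold uniformProb
  positivity

theorem sum_uniformProb_mul [Fintype β] (F : Finset α) (g : α → β) (φ : β → ℝ) :
    ∑ y, uniformProb F g y * φ y = 𝔼 c ∈ F, φ (g c) := by
  rw [expect_eq_sum_div_card, ← sum_fiberwise' F g φ, sum_div]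
  refine sum_congr rfl fun y _ => ?_
  rw [sum_const, nsmul_eq_mul, uniformProb, div_mul_eq_mul_div]

theorem sum_uniformProb [Fintype β] (hF : F.Nonempty) (g : α → β) :
    ∑ y, uniformProb F g y = 1 := by
  simpa only [mul_one, expect_const hF] using sum_uniformProb_mul F g fun _ => 1

theorem sum_uniformProb_prodMk [Fintype β] (F : Finset α) (g : α → β) (k : α → γ) (z : γ) :
    ∑ y, uniformProb F (fun c => (g c, k c)) (y, z) = uniformProb F k z := by
  simp only [uniformProb, ← sum_div, Prod.mk.injEq, ← Nat.cast_sum]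
  rw [card_eq_sum_card_fiberwise (s := {c ∈ F | k c = z}) (f := g) (t := univ) (by simp)]
  simp only [filter_filter, and_comm]

theorem entOf_eq_neg_expect [Fintype β] (s : ℕ) (F : Finset α) (g : α → β) :
    entOf s F g = -𝔼 c ∈ F, Real.logb s (uniformProb F g (g c)) := by
  rw [← sum_uniformProb_mul F g fun y => Real.logb s (uniformProb F g y)]
  rfl

theorem entOf_congr [Fintype β] [Fintype γ] (s : ℕ) {g : α → β} {k : α → γ}
    (h : ∀ c ∈ F, ∀ d ∈ F, g c = g d ↔ k c = k d) : entOf s F g = entOf s F k := by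
  simp only [entOf_eq_neg_expect, uniformProb]
  congr 1
  refine expect_congr rfl fun c hc => ?_
  rw [filter_congr fun d hd => h d hd c hc]

theorem entOf_nonneg [Fintype β] (s : ℕ) (F : Finset α) (g : α → β) : 0 ≤ entOf s F g := by
  rw [entOf_eq_neg_expect, ← expect_neg_distrib]
  refine expect_nonneg fun c _ => neg_nonneg.2 <|
    div_nonpos_of_nonpos_of_nonneg ?_ (Real.log_natCast_nonneg s)
  exact Real.log_nonpos (uniformProb_nonneg F g _) (uniformProb_le_one F g _)

/-- **Gibbs' inequality**, for a sub-probability vector `q`. -/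
theorem entOf_le_neg_expect_logb [Fintype β] (s : ℕ) (hF : F.Nonempty) (g : α → β) {q : β → ℝ}
    (hq_nonneg : ∀ y, 0 ≤ q y) (hq_pos : ∀ c ∈ F, 0 < q (g c)) (hq_sum : ∑ y, q y ≤ 1) :
    entOf s F g ≤ -𝔼 c ∈ F, Real.logb s (q (g c)) := by
  set p := uniformProb F g
  have log_le (c) (hc : c ∈ F) :
      Real.log (q (g c)) - Real.log (p (g c)) ≤ q (g c) / p (g c) - 1 := by
    have hp : 0 < p (g c) := uniformProb_apply_pos hc g
    rw [← Real.log_div (hq_pos c hc).ne' hp.ne']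
    exact Real.log_le_sub_one_of_pos (div_pos (hq_pos c hc) hp)
  have ratio_le : 𝔼 c ∈ F, q (g c) / p (g c) ≤ 1 := calc
    𝔼 c ∈ F, q (g c) / p (g c) = ∑ y, p y * (q y / p y) :=
      (sum_uniformProb_mul F g fun y => q y / p y).symm
    _ ≤ ∑ y, q y := by
      refine sum_le_sum fun y _ => ?_
      rw [mul_div_left_comm]
      exact mul_le_of_le_one_right (hq_nonneg y) (div_self_le_one _)
    _ ≤ 1 := hq_sum
  have log_sum_le : 𝔼 c ∈ F, Real.log (q (g c)) ≤ 𝔼 c ∈ F, Real.log (p (g c)) := by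
    have := expect_le_expect log_le
    rw [expect_sub_distrib, expect_sub_distrib, expect_const hF] at this
    linarith
  rw [entOf_eq_neg_expect, neg_le_neg_iff]
  simp only [Real.logb, ← expect_div]
  exact div_le_div_of_nonneg_right log_sum_le (Real.log_natCast_nonneg s)

theorem entOf_le_logb_card [Fintype β] (s : ℕ) (hF : F.Nonempty) (g : α → β) :
    entOf s F g ≤ Real.logb s (Fintype.card β) := by
  have ⟨c₀, _⟩ := hF
  have : Nonempty β := ⟨g c₀⟩
  have hcard : (Fintype.card β : ℝ) ≠ 0 := Nat.cast_ne_zero.2 Fintype.card_ne_zero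
  have := entOf_le_neg_expect_logb s hF g (q := fun _ => (Fintype.card β : ℝ)⁻¹)
    (fun _ => by positivity) (fun _ _ => by positivity) (by simp [hcard])
  simpa only [Real.logb_inv, expect_const hF, neg_neg] using this

theorem sum_uniformProb_mul_div [Fintype β] [Fintype γ] [Fintype δ] (hF : F.Nonempty)
    (a : α → β) (b : α → γ) (k : α → δ) :
    ∑ y : β × γ × δ, uniformProb F (fun c => (a c, k c)) (y.1, y.2.2) *
      uniformProb F (fun c => (b c, k c)) y.2 / uniformProb F k y.2.2 = 1 := by
  simp only [Fintype.sum_prod_type_right, ← sum_div, ← sum_mul, ← mul_sum, sum_uniformProb_prodMk,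
    mul_self_div_self, sum_uniformProb hF]

theorem entOf_prodMk_add_entOf_le_s10 [Fintype β] [Fintype γ] [Fintype δ] (s : ℕ) (hF : F.Nonempty)
    (a : α → β) (b : α → γ) (k : α → δ) :
    entOf s F (fun c => (a c, b c, k c)) + entOf s F k ≤
      entOf s F (fun c => (a c, k c)) + entOf s F (fun c => (b c, k c)) := by
  set pₐ := uniformProb F fun c => (a c, k c)
  set pᵦ := uniformProb F fun c => (b c, k c)
  set p := uniformProb F k
  have pₐ_pos (c) (hc : c ∈ F) : 0 < pₐ (a c, k c) := uniformProb_apply_pos hc _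
  have pᵦ_pos (c) (hc : c ∈ F) : 0 < pᵦ (b c, k c) := uniformProb_apply_pos hc _
  have p_pos (c) (hc : c ∈ F) : 0 < p (k c) := uniformProb_apply_pos hc k
  have gibbs := entOf_le_neg_expect_logb s hF (fun c => (a c, b c, k c))
    (q := fun y => pₐ (y.1, y.2.2) * pᵦ y.2 / p y.2.2)
    (fun _ => div_nonneg (mul_nonneg (uniformProb_nonneg ..) (uniformProb_nonneg ..))
      (uniformProb_nonneg ..))
    (fun c hc => div_pos (mul_pos (pₐ_pos c hc) (pᵦ_pos c hc)) (p_pos c hc))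
    (sum_uniformProb_mul_div hF a b k).le
  have logb_split : 𝔼 c ∈ F, Real.logb s (pₐ (a c, k c) * pᵦ (b c, k c) / p (k c)) =
      𝔼 c ∈ F, Real.logb s (pₐ (a c, k c)) + 𝔼 c ∈ F, Real.logb s (pᵦ (b c, k c)) -
        𝔼 c ∈ F, Real.logb s (p (k c)) := by
    rw [← expect_add_distrib, ← expect_sub_distrib]
    refine expect_congr rfl fun c hc => ?_
    rw [Real.logb_div (mul_pos (pₐ_pos c hc) (pᵦ_pos c hc)).ne' (p_pos c hc).ne',
      Real.logb_mul (pₐ_pos c hc).ne' (pᵦ_pos c hc).ne']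
  rw [logb_split] at gibbs
  rw [entOf_eq_neg_expect s F k, entOf_eq_neg_expect s F fun c => (a c, k c),
    entOf_eq_neg_expect s F fun c => (b c, k c)]
  linarith

end Entropy

section Coordinates

variable {n s : ℕ} [NeZero n] {F : Finset (ZMod n → Fin s)}

theorem entT_eq_entOf {γ : Type} [DecidableEq γ] [Fintype γ] {T : Finset ℤ}
    {g : (ZMod n → Fin s) → γ}
    (h : ∀ c ∈ F, ∀ d ∈ F, (∀ i ∈ T, c (i : ZMod n) = d (i : ZMod n)) ↔ g c = g d) :
    entT n s F T = entOf s F g :=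
  entOf_congr s fun c hc d hd => by simp only [← h c hc d hd, funext_iff, Subtype.forall]

theorem entT_nonneg (F : Finset (ZMod n → Fin s)) (T : Finset ℤ) : 0 ≤ entT n s F T :=
  entOf_nonneg s F _

theorem entT_union_add_entT_inter_le (hF : F.Nonempty) (S T : Finset ℤ) :
    entT n s F (S ∪ T) + entT n s F (S ∩ T) ≤ entT n s F S + entT n s F T := by
  let restrict (U : Finset ℤ) (c : ZMod n → Fin s) (i : U) : Fin s := c ((i : ℤ) : ZMod n)
  have restrict_eq (U c d) : restrict U c = restrict U d ↔ ∀ i ∈ U, c (i : ZMod n) = d i := by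
    simp only [restrict, funext_iff, Subtype.forall]
  have h_union : entT n s F (S ∪ T) =
      entOf s F fun c => (restrict S c, restrict T c, restrict (S ∩ T) c) :=
    entT_eq_entOf fun c _ d _ => by
      simp only [Prod.mk.injEq, restrict_eq, mem_union, mem_inter]
      grind
  have h_left : entT n s F S = entOf s F fun c => (restrict S c, restrict (S ∩ T) c) :=
    entT_eq_entOf fun c _ d _ => by
      simp only [Prod.mk.injEq, restrict_eq, mem_inter]
      grind
  have h_right : entT n s F T = entOf s F fun c => (restrict T c, restrict (S ∩ T) c) :=
    entT_eq_entOf fun c _ d _ => by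
      simp only [Prod.mk.injEq, restrict_eq, mem_inter]
      grind
  rw [h_union, h_left, h_right]
  exact entOf_prodMk_add_entOf_le_s10 s hF (restrict S) (restrict T) (restrict (S ∩ T))

theorem entT_singleton_le_one (hs : 2 ≤ s) (hF : F.Nonempty) (i : ℤ) : entT n s F {i} ≤ 1 := calc
  entT n s F {i} = entOf s F fun c => c i := entT_eq_entOf fun c _ d _ => by simp
  _ ≤ Real.logb s (Fintype.card (Fin s)) := entOf_le_logb_card s hF _
  _ = 1 := by rw [Fintype.card_fin, Real.logb_self_eq_one (mod_cast hs)]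

theorem entT_insert_le_one_add (hs : 2 ≤ s) (hF : F.Nonempty) (i : ℤ) (T : Finset ℤ) :
    entT n s F (insert i T) ≤ 1 + entT n s F T := by
  have h_submod := entT_union_add_entT_inter_le hF {i} T
  have h_single := entT_singleton_le_one hs hF i
  have h_nonneg := entT_nonneg F ({i} ∩ T)
  rw [insert_eq]
  linarith

end Coordinates

section FixedSet

variable {n s : ℕ} [NeZero n] {f : ZMod n → Fin s × Fin s → Fin s} {F : Finset (ZMod n → Fin s)}

theorem eq_of_mem_cycleFix {c d : ZMod n → Fin s} (hc : c ∈ cycleFix n s f)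
    (hd : d ∈ cycleFix n s f) {i : ZMod n} (h_pred : c (i - 1) = d (i - 1))
    (h_succ : c (i + 1) = d (i + 1)) : c i = d i := by
  rw [(mem_filter.1 hc).2 i, (mem_filter.1 hd).2 i, h_pred, h_succ]

theorem entT_insert_of_neighbors_mem (hFP : F ⊆ cycleFix n s f) {i : ℤ} {T : Finset ℤ}
    (h_pred : i - 1 ∈ T) (h_succ : i + 1 ∈ T) : entT n s F (insert i T) = entT n s F T := by
  refine entT_eq_entOf fun c hc d hd => ?_
  simp only [funext_iff, Subtype.forall, forall_mem_insert, and_iff_right_iff_imp]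
  intro h
  exact eq_of_mem_cycleFix (hFP hc) (hFP hd) (by simpa using h _ h_pred) (by simpa using h _ h_succ)

theorem entT_triple_eq_entT_pair (hFP : F ⊆ cycleFix n s f) (j : ℤ) :
    entT n s F {j, j + 1, j + 2} = entT n s F {j, j + 2} := by
  rw [insert_comm]
  exact entT_insert_of_neighbors_mem hFP (by simp) (by simp [add_assoc])

theorem entT_Icc_add_entT_le (hFP : F ⊆ cycleFix n s f) (hF : F.Nonempty) (j : ℤ) :
    entT n s F (Icc j (j + 3)) + entT n s F {j + 1, j + 2} ≤
      entT n s F {j, j + 2} + entT n s F {j + 1, j + 3} := by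
  have h_union : ({j, j + 1, j + 2} ∪ {j + 1, j + 2, j + 3} : Finset ℤ) = Icc j (j + 3) := by
    ext i
    simp only [mem_Icc, mem_union, mem_insert, mem_singleton]
    omega
  have h_inter : ({j, j + 1, j + 2} ∩ {j + 1, j + 2, j + 3} : Finset ℤ) = {j + 1, j + 2} := by
    ext i
    simp only [mem_inter, mem_insert, mem_singleton]
    omega
  have h_right : entT n s F {j + 1, j + 2, j + 3} = entT n s F {j + 1, j + 3} := by
    simpa only [add_assoc, Int.reduceAdd] using entT_triple_eq_entT_pair hFP (j + 1)
  have h_submod := entT_union_add_entT_inter_le hF {j, j + 1, j + 2} {j + 1, j + 2, j + 3}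
  rwa [h_union, h_inter, entT_triple_eq_entT_pair hFP, h_right] at h_submod

theorem cycle_guessing_stmt10_general (hs : 2 ≤ s) (hFP : F ⊆ cycleFix n s f) (hF : F.Nonempty)
    (j : ℤ) :
    entH n s F j (j + 4) ≤ 3 + entT n s F {j + 1, j + 3} -
      (entT n s F {j + 1, j + 2} + entT n s F {j + 2, j + 3} -
        entT n s F {j + 1, j + 2, j + 3} - entT n s F {j + 2}) := by
  have h_left : entT n s F (Icc j (j + 4 - 1)) + entT n s F {j + 1, j + 2} ≤
      entT n s F {j, j + 2} + entT n s F {j + 1, j + 3} := by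
    simpa only [add_sub_assoc, Int.reduceSub] using entT_Icc_add_entT_le hFP hF j
  have h_right : entT n s F (Icc (j + 1) (j + 4)) + entT n s F {j + 2, j + 3} ≤
      entT n s F {j + 1, j + 3} + entT n s F {j + 2, j + 4} := by
    simpa only [add_assoc, Int.reduceAdd] using entT_Icc_add_entT_le hFP hF (j + 1)
  have h_mid : entT n s F {j + 1, j + 2, j + 3} = entT n s F {j + 1, j + 3} := by
    simpa only [add_assoc, Int.reduceAdd] using entT_triple_eq_entT_pair hFP (j + 1)
  have h_first := entT_insert_le_one_add hs hF j {j + 2}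
  have h_last : entT n s F {j + 2, j + 4} ≤ 1 + entT n s F {j + 2} := by
    rw [pair_comm]
    exact entT_insert_le_one_add hs hF (j + 4) {j + 2}
  have h_center := entT_singleton_le_one hs hF (j + 2)
  rw [entH, h_mid]
  linarith

end FixedSet

/-- Let `n ≥ 5` and `s ≥ 2`, let `P` be a non-trivial protocol on
`C_n` with `s` colours and let `X` be uniform on `Fix(P)`.  Then
`H_1^5 ≤ 3 + h(2,4) − I(X₂; X₄ | X₃)`, where the conditional mutual information is
`I(A;B|C) = H(A,C) + H(B,C) − H(A,B,C) − H(C)`. -/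
theorem cycle_guessing_stmt10 (n s : ℕ) [NeZero n] (hn : 5 ≤ n) (hs : 2 ≤ s)
    (f : ZMod n → Fin s × Fin s → Fin s)
    (hne : (cycleFix n s f).Nonempty) :
    entH n s (cycleFix n s f) 1 5 ≤
      3 + entT n s (cycleFix n s f) {2, 4} -
        (entT n s (cycleFix n s f) {2, 3} + entT n s (cycleFix n s f) {3, 4}
          - entT n s (cycleFix n s f) {2, 3, 4} - entT n s (cycleFix n s f) {3}) := by
  simpa using cycle_guessing_stmt10_general hs Subset.rfl hne 1
end

section
/- For every integer s ≥ 2 there exist constants ε > 0 and δ > 0 such that the following holds. Let n ≥ 5 be an integer, let P = (f_1,…,f_n) be a non-trivial protocol on C_n with s colours and let X be uniformly distributed on Fix(P). For any index j, if f_{j+2} is not semi-perfect or the pair (X_{j+1}, X_{j+3}) is not (s², ε)-uniform, then H_j^{j+4} ≤ 5 − δ. -/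
open Finset

/-- Base-`s` Shannon entropy of `g(U)` where `U` is distributed on the finite type
`α` with probability mass function `q`. -/
noncomputable def pEnt (s : ℕ) {α β : Type} [Fintype α] [DecidableEq β] [Fintype β]
    (q : α → ℝ) (g : α → β) : ℝ :=
  -∑ y : β, (∑ x ∈ Finset.univ.filter fun x => g x = y, q x) *
      Real.logb s (∑ x ∈ Finset.univ.filter fun x => g x = y, q x)

/-- The conditional mutual information `I(U₁; U₂ | f(U))` (base `s`), where the pair
`U = (U₁, U₂)` has joint probability mass function `q` on `Z_s × Z_s`, computed via
`I(A;B|C) = H(A,C) + H(B,C) − H(A,B,C) − H(C)`. -/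
noncomputable def condMI (s : ℕ) (f : Fin s × Fin s → Fin s)
    (q : Fin s × Fin s → ℝ) : ℝ :=
  pEnt s q (fun u => (u.1, f u)) + pEnt s q (fun u => (u.2, f u))
    - pEnt s q (fun u => (u.1, u.2, f u)) - pEnt s q f

/-- The uniform probability mass function on `Z_s × Z_s`. -/
noncomputable def unifPair (s : ℕ) : Fin s × Fin s → ℝ := fun _ => 1 / (s ^ 2 : ℝ)

/-- A function `f : Z_s × Z_s → Z_s` is flat if every fibre has exactly `s` elements. -/
def IsFlat (s : ℕ) (f : Fin s × Fin s → Fin s) : Prop :=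
  ∀ z : Fin s, (Finset.univ.filter fun u => f u = z).card = s

/-- A function `f : Z_s × Z_s → Z_s` is semi-perfect if it is flat and, for
`U = (U₁,U₂)` uniform on `Z_s × Z_s`, `I(U₁; U₂ | f(U)) = 0`. -/
def IsSemiPerfect (s : ℕ) (f : Fin s × Fin s → Fin s) : Prop :=
  IsFlat s f ∧ condMI s f (unifPair s) = 0

/-- The pair `(X_a, X_b)` of coordinates of `X ∈_u F` is `(s², ε)`-uniform, i.e. each
value in `Z_s × Z_s` has probability within `ε` of `1/s²`. -/
def pairUnif (n s : ℕ) [NeZero n] (F : Finset (ZMod n → Fin s))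
    (a b : ZMod n) (ε : ℝ) : Prop :=
  ∀ z : Fin s × Fin s,
    |((F.filter fun c => (c a, c b) = z).card : ℝ) / (F.card : ℝ)
      - 1 / (s ^ 2 : ℝ)| ≤ ε

/-!
Write `A, B, C, D, E` for `X_j, …, X_{j+4}` and `f` for `f_{j+2}`, so that `C = f (B, D)`. As `B` is
a function of `(A, C)`, submodularity gives `H(A,B,C,D) ≤ 1 + H(C) + H(B,D) - H(B,C)`, and
symmetrically for `H(B,C,D,E)`. Adding the two bounds yields `H_j^{j+4} ≤ 2 + Ψ`, where
`Ψ = H(f(U)) + H(U) - I(U₁; U₂ | f(U))` depends only on `f` and on the law of `U = (B, D)`. Here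
`Ψ ≤ 3`, with equality only if `U` is uniform and `f` is semi-perfect. Since `Ψ` is continuous in
the law of `U`, which ranges over a compact simplex, and there are finitely many `f`, the strict
inequality improves to a gap `δ` that depends only on `s` and `ε`.
-/

section Gibbs

variable {ι : Type*} [Fintype ι] {b : ℝ} {p q : ι → ℝ}

lemma mul_klFun_div {x y : ℝ} (h : y = 0 → x = 0) :
    y * InformationTheory.klFun (x / y) = x * Real.log x - x * Real.log y + (y - x) := by
  rcases eq_or_ne y 0 with rfl | hy
  · simp [h rfl]
  rcases eq_or_ne x 0 with rfl | hx
  · simp [InformationTheory.klFun_zero]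
  rw [InformationTheory.klFun_apply, Real.log_div hx hy]
  field_simp
  ring

lemma sum_mul_logb_sub_sum_mul_logb (hpq : ∀ i, q i = 0 → p i = 0) :
    ∑ i, p i * Real.logb b (p i) - ∑ i, p i * Real.logb b (q i) =
      (∑ i, q i * InformationTheory.klFun (p i / q i) + (∑ i, p i - ∑ i, q i)) / Real.log b := by
  simp only [fun i => mul_klFun_div (hpq i), ← sum_sub_distrib, ← sum_add_distrib, sum_div]
  exact sum_congr rfl fun i _ => by rw [Real.logb, Real.logb]; ring

lemma mul_klFun_div_nonneg {x y : ℝ} (hx : 0 ≤ x) (hy : 0 ≤ y) :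
    0 ≤ y * InformationTheory.klFun (x / y) :=
  mul_nonneg hy (InformationTheory.klFun_nonneg (div_nonneg hx hy))

lemma sum_mul_logb_le_sum_mul_logb (hb : 1 < b) (hp : ∀ i, 0 ≤ p i) (hq : ∀ i, 0 ≤ q i)
    (hpq : ∀ i, q i = 0 → p i = 0) (hsum : ∑ i, q i ≤ ∑ i, p i) :
    ∑ i, p i * Real.logb b (q i) ≤ ∑ i, p i * Real.logb b (p i) := by
  rw [← sub_nonneg, sum_mul_logb_sub_sum_mul_logb hpq]
  exact div_nonneg (add_nonneg (sum_nonneg fun i _ => mul_klFun_div_nonneg (hp i) (hq i))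
    (sub_nonneg.2 hsum)) (Real.log_pos hb).le

lemma eq_of_sum_mul_logb_le (hb : 1 < b) (hp : ∀ i, 0 ≤ p i) (hq : ∀ i, 0 ≤ q i)
    (hpq : ∀ i, q i = 0 → p i = 0) (hsum : ∑ i, q i ≤ ∑ i, p i)
    (h : ∑ i, p i * Real.logb b (p i) ≤ ∑ i, p i * Real.logb b (q i)) : p = q := by
  have hnonneg : ∀ i ∈ univ, 0 ≤ q i * InformationTheory.klFun (p i / q i) :=
    fun i _ => mul_klFun_div_nonneg (hp i) (hq i)
  have hle : ∑ i, q i * InformationTheory.klFun (p i / q i) + (∑ i, p i - ∑ i, q i) ≤ 0 := by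
    rwa [← sub_nonpos, sum_mul_logb_sub_sum_mul_logb hpq, div_le_iff₀ (Real.log_pos hb),
      zero_mul] at h
  have hzero : ∑ i, q i * InformationTheory.klFun (p i / q i) = 0 :=
    le_antisymm (by linarith) (sum_nonneg hnonneg)
  funext i
  rcases mul_eq_zero.1 ((sum_eq_zero_iff_of_nonneg hnonneg).1 hzero i (mem_univ i)) with hi | hi
  · rw [hi, hpq i hi]
  · exact eq_of_div_eq_one
      ((InformationTheory.klFun_eq_zero_iff (div_nonneg (hp i) (hq i))).1 hi)

lemma one_div_card_ne_zero {β : Type*} [Fintype β] (y : β) :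
    1 / (Fintype.card β : ℝ) ≠ 0 :=
  one_div_ne_zero (Nat.cast_ne_zero.2 (Fintype.card_pos_iff.2 ⟨y⟩).ne')

end Gibbs

section Marginal

variable {α β γ : Type*} [Fintype α] [DecidableEq β] [DecidableEq γ] {w : α → ℝ}

/-- The law of `g` under the weights `w`: `marginal w g y` is the total weight of the fibre of `g`
over `y`. -/
noncomputable def marginal (w : α → ℝ) (g : α → β) (y : β) : ℝ :=
  ∑ x with g x = y, w x

lemma marginal_nonneg (hw : ∀ x, 0 ≤ w x) (g : α → β) (y : β) : 0 ≤ marginal w g y :=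
  sum_nonneg fun x _ => hw x

lemma marginal_apply_pos (hw : ∀ x, 0 ≤ w x) (g : α → β) {x : α} (hx : w x ≠ 0) :
    0 < marginal w g (g x) :=
  ((hw x).lt_of_ne' hx).trans_le (single_le_sum (fun x _ => hw x) (by simp))

lemma exists_ne_zero_of_marginal_ne_zero {g : α → β} {y : β} (h : marginal w g y ≠ 0) :
    ∃ x, g x = y ∧ w x ≠ 0 := by
  obtain ⟨x, hx, hwx⟩ := exists_ne_zero_of_sum_ne_zero h
  exact ⟨x, (mem_filter.1 hx).2, hwx⟩

lemma marginal_id [DecidableEq α] (w : α → ℝ) : marginal w id = w := by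
  funext x
  simp [marginal, sum_filter]

lemma sum_marginal_mul [Fintype β] (w : α → ℝ) (g : α → β) (φ : β → ℝ) :
    ∑ y, marginal w g y * φ y = ∑ x, w x * φ (g x) := by
  rw [← sum_fiberwise univ g]
  refine sum_congr rfl fun y _ => ?_
  rw [marginal, sum_mul]
  exact sum_congr rfl fun x hx => by rw [(mem_filter.1 hx).2]

lemma sum_marginal [Fintype β] (w : α → ℝ) (g : α → β) : ∑ y, marginal w g y = ∑ x, w x := by
  simpa only [mul_one] using sum_marginal_mul w g fun _ => 1

lemma marginal_marginal [Fintype β] (w : α → ℝ) (g : α → β) (k : β → γ) :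
    marginal (marginal w g) k = marginal w (fun x => k (g x)) := by
  funext z
  simpa only [marginal, mul_ite, mul_one, mul_zero, sum_filter] using
    sum_marginal_mul w g fun y => if k y = z then 1 else 0

lemma sum_marginal_prodMk [Fintype β] (w : α → ℝ) (X : α → β) (Z : α → γ) (z : γ) :
    ∑ x, marginal w (fun a => (X a, Z a)) (x, z) = marginal w Z z := by
  simp only [marginal, ← filter_filter, Prod.mk.injEq, and_comm (b := Z _ = z)]
  exact sum_fiberwise _ X w

lemma marginal_mem_stdSimplex [Fintype β] (hw : w ∈ stdSimplex ℝ α) (g : α → β) :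
    marginal w g ∈ stdSimplex ℝ β :=
  ⟨marginal_nonneg hw.1 g, (sum_marginal w g).trans hw.2⟩

end Marginal

section CondIndepLaw

variable {α β γ ζ : Type*} [Fintype α] [DecidableEq β] [DecidableEq γ] [DecidableEq ζ] {w : α → ℝ}

/-- The law that `(X, Y, Z)` would have if `X` and `Y` were conditionally independent given `Z`,
with the laws of `(X, Z)` and `(Y, Z)` unchanged. Where `Z` has no mass the quotient is `0 / 0 = 0`,
as it should be. -/
noncomputable def condIndepLaw (w : α → ℝ) (X : α → β) (Y : α → γ) (Z : α → ζ) (t : β × γ × ζ) :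
    ℝ :=
  marginal w (fun a => (X a, Z a)) (t.1, t.2.2) * marginal w (fun a => (Y a, Z a)) (t.2.1, t.2.2)
    / marginal w Z t.2.2

lemma condIndepLaw_nonneg (hw : ∀ x, 0 ≤ w x) (X : α → β) (Y : α → γ) (Z : α → ζ)
    (t : β × γ × ζ) : 0 ≤ condIndepLaw w X Y Z t :=
  div_nonneg (mul_nonneg (marginal_nonneg hw _ _) (marginal_nonneg hw _ _))
    (marginal_nonneg hw _ _)

lemma marginal_eq_zero_of_condIndepLaw_eq_zero (hw : ∀ x, 0 ≤ w x) {X : α → β} {Y : α → γ}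
    {Z : α → ζ} {t : β × γ × ζ} (ht : condIndepLaw w X Y Z t = 0) :
    marginal w (fun a => (X a, Y a, Z a)) t = 0 := by
  by_contra hne
  obtain ⟨a, rfl, ha⟩ := exists_ne_zero_of_marginal_ne_zero hne
  exact (div_pos (mul_pos (marginal_apply_pos hw (fun a => (X a, Z a)) ha)
    (marginal_apply_pos hw (fun a => (Y a, Z a)) ha)) (marginal_apply_pos hw Z ha)).ne' ht

lemma sum_condIndepLaw [Fintype β] [Fintype γ] [Fintype ζ] (w : α → ℝ) (X : α → β) (Y : α → γ)
    (Z : α → ζ) : ∑ t, condIndepLaw w X Y Z t = ∑ a, w a := by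
  calc ∑ t, condIndepLaw w X Y Z t
      = ∑ z, (∑ x, marginal w (fun a => (X a, Z a)) (x, z)) *
          (∑ y, marginal w (fun a => (Y a, Z a)) (y, z)) / marginal w Z z := by
        simp only [condIndepLaw, Fintype.sum_prod_type_right, sum_mul_sum, sum_div]
        exact sum_congr rfl fun z _ => sum_comm
    _ = ∑ z, marginal w Z z := by simp only [sum_marginal_prodMk, mul_self_div_self]
    _ = ∑ a, w a := sum_marginal w Z

lemma mul_logb_condIndepLaw (b : ℝ) (hw : ∀ x, 0 ≤ w x) (X : α → β) (Y : α → γ) (Z : α → ζ)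
    (a : α) :
    w a * Real.logb b (condIndepLaw w X Y Z (X a, Y a, Z a)) =
      w a * Real.logb b (marginal w (fun a => (X a, Z a)) (X a, Z a))
        + w a * Real.logb b (marginal w (fun a => (Y a, Z a)) (Y a, Z a))
        - w a * Real.logb b (marginal w Z (Z a)) := by
  rcases eq_or_ne (w a) 0 with ha | ha
  · simp [ha]
  have hXZ := (marginal_apply_pos hw (fun a => (X a, Z a)) ha).ne'
  have hYZ := (marginal_apply_pos hw (fun a => (Y a, Z a)) ha).ne'
  have hZ := (marginal_apply_pos hw Z ha).ne'
  rw [condIndepLaw, Real.logb_div (mul_ne_zero hXZ hYZ) hZ, Real.logb_mul hXZ hYZ]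
  ring

end CondIndepLaw

section Entropy

variable {α β γ ζ : Type} [Fintype α] [Fintype β] [Fintype γ] [Fintype ζ]
  [DecidableEq β] [DecidableEq γ] [DecidableEq ζ] {s : ℕ} {w : α → ℝ}

lemma pEnt_eq_neg_sum_marginal (s : ℕ) (w : α → ℝ) (g : α → β) :
    pEnt s w g = -∑ y, marginal w g y * Real.logb s (marginal w g y) := rfl

lemma pEnt_eq_neg_sum (s : ℕ) (w : α → ℝ) (g : α → β) :
    pEnt s w g = -∑ x, w x * Real.logb s (marginal w g (g x)) := by
  rw [pEnt_eq_neg_sum_marginal, sum_marginal_mul w g fun y => Real.logb s (marginal w g y)]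

lemma pEnt_congr (s : ℕ) (w : α → ℝ) {g : α → β} {g' : α → γ}
    (h : ∀ x x', g x = g x' ↔ g' x = g' x') : pEnt s w g = pEnt s w g' := by
  simp only [pEnt_eq_neg_sum, marginal, h]

lemma pEnt_marginal (s : ℕ) (w : α → ℝ) (g : α → β) (k : β → γ) :
    pEnt s (marginal w g) k = pEnt s w (fun x => k (g x)) := by
  simp only [pEnt_eq_neg_sum_marginal, marginal_marginal]

@[fun_prop]
lemma continuous_pEnt (s : ℕ) (g : α → β) : Continuous fun w : α → ℝ => pEnt s w g := by
  have h (w : α → ℝ) : pEnt s w g = (∑ y, Real.negMulLog (marginal w g y)) / Real.log s := by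
    simp only [pEnt_eq_neg_sum_marginal, Real.negMulLog, Real.logb, sum_div, ← sum_neg_distrib]
    exact sum_congr rfl fun y _ => by ring
  simp only [h, marginal]
  fun_prop

lemma pEnt_const (hw : w ∈ stdSimplex ℝ α) (y : β) : pEnt s w (fun _ => y) = 0 := by
  simp [pEnt_eq_neg_sum, marginal, hw.2]

lemma pEnt_submodular (hs : 1 < s) (hw : ∀ x, 0 ≤ w x) (X : α → β) (Y : α → γ) (Z : α → ζ) :
    pEnt s w (fun a => (X a, Y a, Z a)) + pEnt s w Z
      ≤ pEnt s w (fun a => (X a, Z a)) + pEnt s w (fun a => (Y a, Z a)) := by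
  have gibbs := sum_mul_logb_le_sum_mul_logb (Nat.one_lt_cast.2 hs)
    (marginal_nonneg hw fun a => (X a, Y a, Z a)) (condIndepLaw_nonneg hw X Y Z)
    (fun _ => marginal_eq_zero_of_condIndepLaw_eq_zero hw)
    (by rw [sum_condIndepLaw, sum_marginal])
  rw [sum_marginal_mul w _ fun t => Real.logb s (condIndepLaw w X Y Z t),
    sum_congr rfl fun a _ => mul_logb_condIndepLaw s hw X Y Z a,
    sum_sub_distrib, sum_add_distrib] at gibbs
  rw [pEnt_eq_neg_sum_marginal s w fun a => (X a, Y a, Z a), pEnt_eq_neg_sum s w Z,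
    pEnt_eq_neg_sum s w fun a => (X a, Z a), pEnt_eq_neg_sum s w fun a => (Y a, Z a)]
  linarith

lemma pEnt_prodMk_le (hs : 1 < s) (hw : w ∈ stdSimplex ℝ α) (X : α → β) (Y : α → γ) :
    pEnt s w (fun a => (X a, Y a)) ≤ pEnt s w X + pEnt s w Y := by
  calc pEnt s w (fun a => (X a, Y a))
      = pEnt s w (fun a => (X a, Y a, ())) + pEnt s w (fun _ => ()) := by
        rw [pEnt_const hw, add_zero]
        exact pEnt_congr s w (by simp)
    _ ≤ pEnt s w (fun a => (X a, ())) + pEnt s w (fun a => (Y a, ())) :=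
        pEnt_submodular hs hw.1 X Y fun _ => ()
    _ = pEnt s w X + pEnt s w Y :=
        congrArg₂ (· + ·) (pEnt_congr s w (by simp)) (pEnt_congr s w (by simp))

lemma sum_one_div_card_le_sum_marginal (hw : w ∈ stdSimplex ℝ α) (g : α → β) :
    ∑ _y : β, 1 / (Fintype.card β : ℝ) ≤ ∑ y, marginal w g y := by
  simpa [sum_marginal, hw.2] using mul_inv_le_one

lemma sum_marginal_mul_logb_one_div_card (hw : w ∈ stdSimplex ℝ α) (g : α → β) :
    ∑ y, marginal w g y * Real.logb s (1 / Fintype.card β) = -Real.logb s (Fintype.card β) := by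
  rw [← sum_mul, sum_marginal, hw.2, one_mul, one_div, Real.logb_inv]

lemma pEnt_le_logb_card (hs : 1 < s) (hw : w ∈ stdSimplex ℝ α) (g : α → β) :
    pEnt s w g ≤ Real.logb s (Fintype.card β) := by
  rw [pEnt_eq_neg_sum_marginal, neg_le, ← sum_marginal_mul_logb_one_div_card hw g]
  exact sum_mul_logb_le_sum_mul_logb (Nat.one_lt_cast.2 hs) (marginal_nonneg hw.1 g)
    (fun _ => by positivity) (fun y hy => absurd hy (one_div_card_ne_zero y))
    (sum_one_div_card_le_sum_marginal hw g)

lemma marginal_eq_one_div_card (hs : 1 < s) (hw : w ∈ stdSimplex ℝ α) {g : α → β}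
    (h : Real.logb s (Fintype.card β) ≤ pEnt s w g) :
    marginal w g = fun _ => 1 / (Fintype.card β : ℝ) := by
  rw [pEnt_eq_neg_sum_marginal, le_neg, ← sum_marginal_mul_logb_one_div_card hw g] at h
  exact eq_of_sum_mul_logb_le (Nat.one_lt_cast.2 hs) (marginal_nonneg hw.1 g)
    (fun _ => by positivity) (fun y hy => absurd hy (one_div_card_ne_zero y))
    (sum_one_div_card_le_sum_marginal hw g) h

end Entropy

section PairBound

variable {s : ℕ} {f : Fin s × Fin s → Fin s} {q : Fin s × Fin s → ℝ}

/-- The quantity `Ψ = H(f(U)) + H(U) - I(U₁; U₂ | f(U))` for a pair `U` with law `q`, which governs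
`H_j^{j+4}` when `U` is the pair of neighbours of the vertex `j + 2`. -/
noncomputable def pairBound (s : ℕ) (f : Fin s × Fin s → Fin s) (q : Fin s × Fin s → ℝ) : ℝ :=
  pEnt s q f + pEnt s q id - condMI s f q

lemma pEnt_fst_snd_apply (s : ℕ) (f : Fin s × Fin s → Fin s) (q : Fin s × Fin s → ℝ) :
    pEnt s q (fun u => (u.1, u.2, f u)) = pEnt s q id :=
  pEnt_congr s q fun x y => by
    simp only [Prod.mk.injEq, id_eq, ← and_assoc, ← Prod.ext_iff]
    exact and_iff_left_of_imp (congrArg f)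

lemma condMI_nonneg (hs : 1 < s) (hq : ∀ u, 0 ≤ q u) : 0 ≤ condMI s f q := by
  rw [condMI]
  linarith [pEnt_submodular hs hq Prod.fst Prod.snd f]

lemma continuous_pairBound (s : ℕ) (f : Fin s × Fin s → Fin s) : Continuous (pairBound s f) := by
  unfold pairBound condMI
  fun_prop

lemma logb_card_fin_prod_fin (hs : 1 < s) : Real.logb s (Fintype.card (Fin s × Fin s)) = 2 := by
  rw [Fintype.card_prod, Fintype.card_fin, ← sq, Nat.cast_pow, Real.logb_pow,
    Real.logb_self_eq_one (Nat.one_lt_cast.2 hs), Nat.cast_ofNat, mul_one]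

lemma logb_card_fin (hs : 1 < s) : Real.logb s (Fintype.card (Fin s)) = 1 := by
  rw [Fintype.card_fin, Real.logb_self_eq_one (Nat.one_lt_cast.2 hs)]

lemma isFlat_of_marginal_unifPair_eq (h : marginal (unifPair s) f = fun _ => 1 / (s : ℝ)) :
    IsFlat s f := by
  intro z
  have hz := congrFun h z
  simp only [marginal, unifPair, sum_const, nsmul_eq_mul] at hz
  have hs : (s : ℝ) ≠ 0 := Nat.cast_ne_zero.2 z.pos.ne'
  field_simp at hz
  exact_mod_cast hz

lemma isSemiPerfect_and_eq_unifPair_of_three_le_pairBound (hs : 1 < s)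
    (hq : q ∈ stdSimplex ℝ (Fin s × Fin s)) (h : 3 ≤ pairBound s f q) :
    IsSemiPerfect s f ∧ q = unifPair s := by
  rw [pairBound] at h
  have hf := pEnt_le_logb_card hs hq f
  have hid := pEnt_le_logb_card hs hq id
  have hI := condMI_nonneg (f := f) hs hq.1
  rw [logb_card_fin hs] at hf
  rw [logb_card_fin_prod_fin hs] at hid
  obtain rfl : q = unifPair s := by
    have := marginal_eq_one_div_card hs hq (g := id) (by rw [logb_card_fin_prod_fin hs]; linarith)
    rw [marginal_id] at this
    simpa [funext_iff, unifPair, sq] using this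
  refine ⟨⟨isFlat_of_marginal_unifPair_eq ?_, by linarith⟩, rfl⟩
  simpa only [Fintype.card_fin] using
    marginal_eq_one_div_card hs hq (g := f) (by rw [logb_card_fin hs]; linarith)

lemma exists_pairBound_le_three_sub (hs : 1 < s) {ε : ℝ} (hε : 0 < ε) :
    ∃ δ > 0, ∀ f, ∀ q ∈ stdSimplex ℝ (Fin s × Fin s),
      (¬ IsSemiPerfect s f ∨ ∃ z, ε ≤ |q z - unifPair s z|) → pairBound s f q ≤ 3 - δ := by
  have hgap (f) : ∃ δ > 0, ∀ q ∈ stdSimplex ℝ (Fin s × Fin s) ∩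
      {q | ¬ IsSemiPerfect s f ∨ ∃ z, ε ≤ |q z - unifPair s z|}, δ ≤ 3 - pairBound s f q := by
    have hclosed : IsClosed {q : Fin s × Fin s → ℝ |
        ¬ IsSemiPerfect s f ∨ ∃ z, ε ≤ |q z - unifPair s z|} := by
      rw [Set.ofPred_or, Set.ofPred_exists]
      exact isClosed_const.union (isClosed_iUnion_of_finite fun z =>
        isClosed_le continuous_const (by fun_prop))
    refine ((isCompact_stdSimplex ℝ _).inter_right hclosed).exists_forall_le'
      (continuous_const.sub (continuous_pairBound s f)).continuousOn fun q ⟨hq, hfar⟩ => ?_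
    by_contra! hle
    obtain ⟨hsemi, rfl⟩ :=
      isSemiPerfect_and_eq_unifPair_of_three_le_pairBound hs hq (sub_nonpos.1 hle)
    obtain hf | ⟨z, hz⟩ := hfar
    · exact hf hsemi
    · rw [sub_self, abs_zero] at hz
      exact hz.not_gt hε
  choose δ hδ hle using hgap
  have : Nonempty (Fin s) := ⟨⟨0, by omega⟩⟩
  obtain ⟨f₀, hmin⟩ := Finite.exists_min δ
  exact ⟨δ f₀, hδ f₀, fun f q hq hfar => by linarith [hmin f, hle f q ⟨hq, hfar⟩]⟩

end PairBound

section Window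

variable {Ω 𝒜 ℬ 𝒞 𝒟 : Type} [Fintype Ω] [Fintype 𝒜] [Fintype ℬ] [Fintype 𝒞] [Fintype 𝒟]
  [DecidableEq 𝒜] [DecidableEq ℬ] [DecidableEq 𝒞] [DecidableEq 𝒟] {s : ℕ} {w : Ω → ℝ}

lemma pEnt_add_pEnt_le_of_eq_apply (hs : 1 < s) (hw : w ∈ stdSimplex ℝ Ω) (A : Ω → 𝒜)
    {B : Ω → ℬ} (C : Ω → 𝒞) (D : Ω → 𝒟) {φ : 𝒜 × 𝒞 → ℬ} (hB : ∀ x, B x = φ (A x, C x)) :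
    pEnt s w (fun x => (A x, B x, C x, D x)) + pEnt s w (fun x => (B x, C x))
      ≤ Real.logb s (Fintype.card 𝒜) + pEnt s w C + pEnt s w (fun x => (B x, C x, D x)) := by
  have hABC : pEnt s w (fun x => (A x, B x, C x)) = pEnt s w (fun x => (A x, C x)) :=
    pEnt_congr s w fun x y => by simp +contextual [hB]
  have hABCD : pEnt s w (fun x => (A x, B x, C x, D x)) =
      pEnt s w (fun x => (A x, D x, B x, C x)) :=
    pEnt_congr s w fun x y => by simp only [Prod.mk.injEq]; tauto
  have hBCD : pEnt s w (fun x => (B x, C x, D x)) = pEnt s w (fun x => (D x, B x, C x)) :=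
    pEnt_congr s w fun x y => by simp only [Prod.mk.injEq]; tauto
  have hsub := pEnt_submodular hs hw.1 A D fun x => (B x, C x)
  have hAC := pEnt_prodMk_le hs hw A C
  have hA := pEnt_le_logb_card hs hw A
  linarith

lemma pEnt_add_pEnt_le_two_add_pairBound (hs : 1 < s) (hw : w ∈ stdSimplex ℝ Ω)
    (A E : Ω → Fin s) {B C D : Ω → Fin s} {f φ ψ : Fin s × Fin s → Fin s}
    (hB : ∀ x, B x = φ (A x, C x)) (hC : ∀ x, C x = f (B x, D x))
    (hD : ∀ x, D x = ψ (C x, E x)) :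
    pEnt s w (fun x => (A x, B x, C x, D x)) + pEnt s w (fun x => (B x, C x, D x, E x))
      ≤ 2 + pairBound s f (marginal w fun x => (B x, D x)) := by
  have hABCD := pEnt_add_pEnt_le_of_eq_apply hs hw A C D hB
  have hEDCB := pEnt_add_pEnt_le_of_eq_apply hs hw E C B (φ := fun u => ψ u.swap) hD
  rw [logb_card_fin hs] at hABCD hEDCB
  have hBCDE : pEnt s w (fun x => (B x, C x, D x, E x)) =
      pEnt s w (fun x => (E x, D x, C x, B x)) :=
    pEnt_congr s w fun x y => by simp only [Prod.mk.injEq]; tauto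
  have hBCD : pEnt s w (fun x => (B x, C x, D x)) = pEnt s w (fun x => (B x, D x)) :=
    pEnt_congr s w fun x y => by simp +contextual [hC]
  have hDCB : pEnt s w (fun x => (D x, C x, B x)) = pEnt s w (fun x => (B x, D x)) :=
    pEnt_congr s w fun x y => by
      simp only [Prod.mk.injEq]
      exact ⟨fun h => ⟨h.2.2, h.1⟩, fun h => ⟨h.2, by rw [hC, hC, h.1, h.2], h.1⟩⟩
  rw [pairBound, condMI, pEnt_fst_snd_apply]
  simp only [pEnt_marginal, id_eq, ← hC]
  linarith

end Window

section Cycle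

variable {n s : ℕ} [NeZero n]

/-- The uniform law on a finite set, as a weight function on its subtype. -/
noncomputable def unifWeight {α : Type*} (F : Finset α) : F → ℝ := fun _ => 1 / (#F : ℝ)

lemma unifWeight_mem_stdSimplex {α : Type*} {F : Finset α} (hF : F.Nonempty) :
    unifWeight F ∈ stdSimplex ℝ F := by
  have hcard : (#F : ℝ) ≠ 0 := Nat.cast_ne_zero.2 hF.card_ne_zero
  exact ⟨fun _ => by unfold unifWeight; positivity, by simp [unifWeight, hcard]⟩

lemma marginal_unifWeight {α β : Type*} [DecidableEq β] (F : Finset α) (g : α → β) (y : β) :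
    marginal (unifWeight F) (fun c : F => g c) y = (#{c ∈ F | g c = y} : ℝ) / #F := by
  have hcard : #{c : F | g c = y} = #{c ∈ F | g c = y} := by
    rw [← card_map (Function.Embedding.subtype _)]
    congr 1
    ext x
    simp [and_comm]
  simp only [marginal, unifWeight, sum_const, nsmul_eq_mul, mul_one_div, hcard]

lemma entOf_eq_pEnt (s : ℕ) {α β : Type} [DecidableEq β] [Fintype β] (F : Finset α) (g : α → β) :
    entOf s F g = pEnt s (unifWeight F) fun c : F => g c := by
  simp only [entOf, pEnt_eq_neg_sum_marginal, marginal_unifWeight]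

lemma entT_Icc_eq_pEnt (F : Finset (ZMod n → Fin s)) {i j k l : ℤ} (hj : j = i + 1)
    (hk : k = i + 2) (hl : l = i + 3) :
    entT n s F (Icc i l) =
      pEnt s (unifWeight F) fun c : F => (c.1 i, c.1 j, c.1 k, c.1 l) := by
  have hIcc : Icc i l = {i, j, k, l} := by
    ext m
    simp only [mem_Icc, mem_insert, mem_singleton]
    omega
  rw [entT, entOf_eq_pEnt, hIcc]
  refine pEnt_congr _ _ fun c c' => ?_
  simp [funext_iff]

lemma apply_intCast_of_mem_cycleFix {f : ZMod n → Fin s × Fin s → Fin s} {c : ZMod n → Fin s}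
    (hc : c ∈ cycleFix n s f) {i j k : ℤ} (hi : i = j - 1) (hk : k = j + 1) :
    c j = f j (c i, c k) := by
  subst hi hk
  push_cast
  exact (mem_filter.1 hc).2 j

lemma entH_le_two_add_pairBound (hs : 1 < s) {f : ZMod n → Fin s × Fin s → Fin s}
    (hne : (cycleFix n s f).Nonempty) (j : ℤ) :
    entH n s (cycleFix n s f) j (j + 4) ≤
      2 + pairBound s (f ((j + 2 : ℤ) : ZMod n)) (marginal (unifWeight (cycleFix n s f))
        fun c => (c.1 ((j + 1 : ℤ) : ZMod n), c.1 ((j + 3 : ℤ) : ZMod n))) := by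
  rw [entH, show j + 4 - 1 = j + 3 by ring, entT_Icc_eq_pEnt _ rfl rfl rfl,
    entT_Icc_eq_pEnt (j := j + 2) (k := j + 3) _ (by ring) (by ring) (by ring)]
  exact pEnt_add_pEnt_le_two_add_pairBound hs (unifWeight_mem_stdSimplex hne) _ _
    (fun c => apply_intCast_of_mem_cycleFix c.2 (by ring) (by ring))
    (fun c => apply_intCast_of_mem_cycleFix c.2 (by ring) (by ring))
    (fun c => apply_intCast_of_mem_cycleFix c.2 (by ring) (by ring))

lemma exists_lt_of_not_pairUnif {F : Finset (ZMod n → Fin s)} {a b : ZMod n} {ε : ℝ}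
    (h : ¬ pairUnif n s F a b ε) :
    ∃ z, ε < |marginal (unifWeight F) (fun c : F => (c.1 a, c.1 b)) z - unifPair s z| := by
  simpa only [pairUnif, unifPair, not_forall, not_le,
    ← marginal_unifWeight F fun c => (c a, c b)] using h

end Cycle

theorem cycle_guessing_stmt11_general (s : ℕ) (hs : 2 ≤ s) (ε : ℝ) (hε : 0 < ε) :
    ∃ δ : ℝ, 0 < δ ∧
      ∀ (n : ℕ) [NeZero n] (f : ZMod n → Fin s × Fin s → Fin s), (cycleFix n s f).Nonempty →
        ∀ j : ℤ,
          (¬ IsSemiPerfect s (f ((j + 2 : ℤ) : ZMod n)) ∨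
            ¬ pairUnif n s (cycleFix n s f)
                ((j + 1 : ℤ) : ZMod n) ((j + 3 : ℤ) : ZMod n) ε) →
          entH n s (cycleFix n s f) j (j + 4) ≤ 5 - δ := by
  obtain ⟨δ, hδ, hgap⟩ := exists_pairBound_le_three_sub hs hε
  refine ⟨δ, hδ, fun n _ f hne j hj => ?_⟩
  have hH := entH_le_two_add_pairBound hs hne j
  have hΨ := hgap _ _ (marginal_mem_stdSimplex (unifWeight_mem_stdSimplex hne) _)
    (hj.imp_right fun h => (exists_lt_of_not_pairUnif h).imp fun _ => le_of_lt)
  linarith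

/-- For every integer `s ≥ 2` there are constants `ε > 0` and
`δ > 0` such that: for every `n ≥ 5`, every non-trivial protocol `P = (f_i)` on `C_n`
with `s` colours with `X` uniform on `Fix(P)`, and every index `j`, if `f_{j+2}` is
not semi-perfect or `(X_{j+1}, X_{j+3})` is not `(s², ε)`-uniform, then
`H_j^{j+4} ≤ 5 − δ`. -/
theorem cycle_guessing_stmt11 (s : ℕ) (hs : 2 ≤ s) :
    ∃ ε : ℝ, 0 < ε ∧ ∃ δ : ℝ, 0 < δ ∧
      ∀ (n : ℕ) [NeZero n], 5 ≤ n →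
        ∀ f : ZMod n → Fin s × Fin s → Fin s, (cycleFix n s f).Nonempty →
          ∀ j : ℤ,
            (¬ IsSemiPerfect s (f ((j + 2 : ℤ) : ZMod n)) ∨
              ¬ pairUnif n s (cycleFix n s f)
                  ((j + 1 : ℤ) : ZMod n) ((j + 3 : ℤ) : ZMod n) ε) →
            entH n s (cycleFix n s f) j (j + 4) ≤ 5 - δ := by
  obtain ⟨δ, hδ, h⟩ := cycle_guessing_stmt11_general s hs (1 / (2 * s ^ 2)) (by positivity)
  exact ⟨1 / (2 * s ^ 2), by positivity, δ, hδ, fun n _ _ => h n⟩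
end
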